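/- Let U ∈ R^{t×n} have nonnegative entries with each row summing to 1, and let u_i denote the i-th row of U. Then SDD^n_+(U) := U^T (SDD^t_+) U equals the conic hull of all matrices vv^T with v belonging to some line segment [u_i, u_j] for 1 ≤ i < j ≤ t. -/

import Mathlib

open Matrix Set

noncomputable section

/-- The embedding `ι_{ij} : S² → Sⁿ` placing a 2×2 symmetric matrix into
rows/columns `i, j` with zeros elsewhere. -/
def iota {n : ℕ} (i j : Fin n) (S : Matrix (Fin 2) (Fin 2) ℝ) :
    Matrix (Fin n) (Fin n) ℝ :=
  Matrix.of fun r s =>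
    (if r = i ∧ s = i then S 0 0 else 0) +
    (if r = i ∧ s = j then S 0 1 else 0) +
    (if r = j ∧ s = i then S 1 0 else 0) +
    (if r = j ∧ s = j then S 1 1 else 0)

/-- The cone `SDDⁿ = Σ_{i<j} ι_{ij}(S²₊)` of scaled diagonally dominant matrices. -/
def SDD (n : ℕ) : Set (Matrix (Fin n) (Fin n) ℝ) :=
  {X | ∃ S : Fin n → Fin n → Matrix (Fin 2) (Fin 2) ℝ,
    (∀ i j : Fin n, (S i j).PosSemidef) ∧
    X = ∑ i : Fin n, ∑ j : Fin n, if i < j then iota i j (S i j) else 0}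

/-- `Nⁿ`: symmetric entrywise nonnegative matrices. -/
def NonnegMat (n : ℕ) : Set (Matrix (Fin n) (Fin n) ℝ) :=
  {X | X.IsSymm ∧ ∀ i j, 0 ≤ X i j}

/-- Dual cone within the space of symmetric matrices, w.r.t. the trace inner product. -/
def dualCone {n : ℕ} (C : Set (Matrix (Fin n) (Fin n) ℝ)) :
    Set (Matrix (Fin n) (Fin n) ℝ) :=
  {Y | Y.IsSymm ∧ ∀ X ∈ C, 0 ≤ (X * Y).trace}

/-- `SDDⁿ₊ = SDDⁿ ∩ Nⁿ`. -/
def SDDplus (n : ℕ) : Set (Matrix (Fin n) (Fin n) ℝ) := SDD n ∩ NonnegMat n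

/-- `SDDⁿ₊(U) = Uᵀ (SDDᵗ₊) U`. -/
def SDDplusU {t n : ℕ} (U : Matrix (Fin t) (Fin n) ℝ) :
    Set (Matrix (Fin n) (Fin n) ℝ) :=
  {X | ∃ Y ∈ SDDplus t, X = Uᵀ * Y * U}

/-- The conic hull: finite nonnegative combinations of elements of `s`. -/
def conicHull {α : Type*} [AddCommMonoid α] [Module ℝ α] (s : Set α) : Set α :=
  {x | ∃ (N : ℕ) (c : Fin N → ℝ) (v : Fin N → α),
    (∀ k, 0 ≤ c k) ∧ (∀ k, v k ∈ s) ∧ x = ∑ k, c k • v k}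

/-- The completely positive cone `CPⁿ`. -/
def CP (n : ℕ) : Set (Matrix (Fin n) (Fin n) ℝ) :=
  {X | ∃ (k : ℕ) (B : Matrix (Fin k) (Fin n) ℝ), (∀ i j, 0 ≤ B i j) ∧ X = Bᵀ * B}

/-!
In a sum of blocks `ι_{ij}(S_{ij})` over `i < j`, the entry at `(i, j)` comes from the block
`S_{ij}` alone, so entrywise nonnegativity of the sum makes every block entrywise nonnegative.
A nonnegative positive semidefinite 2×2 block is `uuᵀ + vvᵀ` with `u, v ≥ 0`, and embedding it turns
`u` into a nonnegative combination of `e_i` and `e_j`, which is a multiple of a point of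
`[e_i, e_j]`. This settles the case of the identity matrix; the congruence `X ↦ Uᵀ X U` sends `vvᵀ`
to `wwᵀ` with `w = Uᵀ v` and the segment `[e_i, e_j]` onto `[u_i, u_j]`.
-/

theorem conicHull_eq_hull {E : Type*} [AddCommMonoid E] [Module ℝ E] (s : Set E) :
    conicHull s = PointedCone.hull ℝ s := by
  ext x
  rw [SetLike.mem_coe, Submodule.mem_span_set']
  constructor
  · rintro ⟨N, c, v, hc, hv, rfl⟩
    exact ⟨N, fun k => ⟨c k, hc k⟩, fun k => ⟨v k, hv k⟩, rfl⟩
  · rintro ⟨N, c, v, rfl⟩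
    exact ⟨N, fun k => c k, fun k => v k, fun k => (c k).2, fun k => (v k).2, rfl⟩

section Segment

variable {𝕜 E : Type*} [Field 𝕜] [LinearOrder 𝕜] [IsStrictOrderedRing 𝕜] [AddCommGroup E]
  [Module 𝕜 E]

theorem exists_mem_segment_smul_eq (x y : E) {a b : 𝕜} (ha : 0 ≤ a) (hb : 0 ≤ b) :
    ∃ v ∈ segment 𝕜 x y, (a + b) • v = a • x + b • y := by
  rcases (add_nonneg ha hb).eq_or_lt with h | h
  · obtain ⟨rfl, rfl⟩ := (add_eq_zero_iff_of_nonneg ha hb).1 h.symm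
    exact ⟨x, left_mem_segment 𝕜 x y, by simp⟩
  · refine ⟨(a / (a + b)) • x + (b / (a + b)) • y,
      ⟨_, _, by positivity, by positivity, by field_simp, rfl⟩, ?_⟩
    rw [smul_add, smul_smul, smul_smul, mul_div_cancel₀ _ h.ne', mul_div_cancel₀ _ h.ne']

end Segment

section Congruence

variable {R m n : Type*} [CommSemiring R] [Fintype m]

/-- The congruence `X ↦ Pᵀ X P` as a linear map. Both `iota i j` and the passage from `SDDplus` to
`SDDplusU U` are of this form. -/
def congruence (P : Matrix m n R) : Matrix m m R →ₗ[R] Matrix n n R :=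
  mulRightLinearMap n R P ∘ₗ mulLeftLinearMap m R Pᵀ

theorem congruence_apply (P : Matrix m n R) (X : Matrix m m R) : congruence P X = Pᵀ * X * P :=
  rfl

theorem congruence_vecMulVec (P : Matrix m n R) (u v : m → R) :
    congruence P (vecMulVec u v) = vecMulVec (u ᵥ* P) (v ᵥ* P) := by
  rw [congruence_apply, mul_vecMulVec, vecMulVec_mul, mulVec_transpose]

end Congruence

section SegmentSquares

variable {ι m n : Type*} [LT ι]

/-- The rank-one matrices `vvᵀ` with `v` on the segment joining two rows of `U`, which generate
`SDDplusU U`. The relation `<` on the index type selects the pairs of rows. -/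
def segmentSquares (U : Matrix ι n ℝ) : Set (Matrix n n ℝ) :=
  {M | ∃ (i j : ι) (v : n → ℝ), i < j ∧ v ∈ segment ℝ (U i) (U j) ∧ M = vecMulVec v v}

theorem congruence_image_segmentSquares [Fintype m] (U : Matrix ι m ℝ) (P : Matrix m n ℝ) :
    congruence P '' segmentSquares U = segmentSquares (U * P) := by
  have image_segment_rows (i j : ι) :
      P.vecMulLinear '' segment ℝ (U i) (U j) = segment ℝ ((U * P) i) ((U * P) j) :=
    image_segment ℝ P.vecMulLinear.toAffineMap (U i) (U j)
  ext M
  constructor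
  · rintro ⟨_, ⟨i, j, v, hij, hv, rfl⟩, rfl⟩
    exact ⟨i, j, v ᵥ* P, hij, image_segment_rows i j ▸ mem_image_of_mem _ hv,
      congruence_vecMulVec P v v⟩
  · rintro ⟨i, j, w, hij, hw, rfl⟩
    obtain ⟨v, hv, rfl⟩ := (image_segment_rows i j).symm ▸ hw
    exact ⟨_, ⟨i, j, v, hij, hv, rfl⟩, congruence_vecMulVec P v v⟩

theorem map_congruence_hull_segmentSquares [Fintype m] (U : Matrix ι m ℝ) (P : Matrix m n ℝ) :
    (PointedCone.hull ℝ (segmentSquares U)).map (congruence P) =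
      PointedCone.hull ℝ (segmentSquares (U * P)) := by
  rw [← congruence_image_segmentSquares]
  exact Submodule.map_span _ _

theorem vecMulVec_self_mem_hull_segmentSquares (U : Matrix ι n ℝ) {i j : ι} (hij : i < j)
    {a b : ℝ} (ha : 0 ≤ a) (hb : 0 ≤ b) :
    vecMulVec (a • U i + b • U j) (a • U i + b • U j) ∈
      PointedCone.hull ℝ (segmentSquares U) := by
  obtain ⟨v, hv, hv_eq⟩ := exists_mem_segment_smul_eq (U i) (U j) ha hb
  rw [← hv_eq, smul_vecMulVec, vecMulVec_smul]
  have hab := add_nonneg ha hb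
  exact PointedCone.smul_mem _ hab <| PointedCone.smul_mem _ hab <|
    PointedCone.subset_hull ⟨i, j, v, hij, hv, rfl⟩

end SegmentSquares

theorem exists_eq_vecMulVec_add_vecMulVec_of_posSemidef {S : Matrix (Fin 2) (Fin 2) ℝ}
    (hS : S.PosSemidef) (h01 : 0 ≤ S 0 1) :
    ∃ u v : Fin 2 → ℝ, 0 ≤ u ∧ 0 ≤ v ∧ S = vecMulVec u u + vecMulVec v v := by
  have h00 : 0 ≤ S 0 0 := hS.diag_nonneg
  have h11 : 0 ≤ S 1 1 := hS.diag_nonneg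
  have S_symm : S 1 0 = S 0 1 := by simpa using hS.isHermitian.apply 0 1
  have sq_le_mul : S 0 1 ^ 2 ≤ S 0 0 * S 1 1 := by
    have := hS.det_nonneg
    rw [det_fin_two, S_symm] at this
    linarith
  have offDiag_eq_zero (h : S 0 0 = 0) : S 0 1 = 0 := by
    rw [h, zero_mul] at sq_le_mul
    exact pow_eq_zero_iff two_ne_zero |>.1 (sq_le_mul.antisymm (sq_nonneg _))
  have schur_nonneg : 0 ≤ S 1 1 - S 0 1 ^ 2 / S 0 0 :=
    sub_nonneg.2 <| div_le_of_le_mul₀ h00 h11 (by linarith)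
  -- These are the rows of `B` in the Cholesky factorization `S = BᵀB`; if `S 0 0 = 0`, then both
  -- quotients are `0`.
  refine ⟨![√(S 0 0), S 0 1 / √(S 0 0)], ![0, √(S 1 1 - S 0 1 ^ 2 / S 0 0)], ?_, ?_, ?_⟩
  · exact Fin.forall_fin_two.2 ⟨Real.sqrt_nonneg _, div_nonneg h01 (Real.sqrt_nonneg _)⟩
  · exact Fin.forall_fin_two.2 ⟨le_rfl, Real.sqrt_nonneg _⟩
  · have sqrt_mul_div_sqrt : √(S 0 0) * (S 0 1 / √(S 0 0)) = S 0 1 :=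
      mul_div_cancel_of_imp' fun h => offDiag_eq_zero ((Real.sqrt_eq_zero h00).1 h)
    ext r s
    fin_cases r <;> fin_cases s
    · simp [h00]
    · simp [sqrt_mul_div_sqrt]
    · simp [sqrt_mul_div_sqrt, S_symm, mul_comm (S 0 1 / _)]
    · simp [schur_nonneg, ← sq, div_pow, h00]

section Iota

variable {n : ℕ}

theorem iota_eq_congruence (i j : Fin n) (S : Matrix (Fin 2) (Fin 2) ℝ) :
    iota i j S = congruence ((1 : Matrix (Fin n) (Fin n) ℝ).submatrix ![i, j] id) S := by
  ext r s
  simp only [iota, congruence_apply, Matrix.mul_apply, Matrix.one_apply, Fin.sum_univ_two,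
    of_apply, transpose_apply, submatrix_apply, cons_val_zero, cons_val_one, id_eq]
  grind

theorem iota_vecMulVec (i j : Fin n) (u v : Fin 2 → ℝ) :
    iota i j (vecMulVec u v) =
      vecMulVec (u 0 • (1 : Matrix (Fin n) (Fin n) ℝ) i + u 1 • (1 : Matrix (Fin n) (Fin n) ℝ) j)
        (v 0 • (1 : Matrix (Fin n) (Fin n) ℝ) i + v 1 • (1 : Matrix (Fin n) (Fin n) ℝ) j) := by
  rw [iota_eq_congruence, congruence_vecMulVec]
  simp only [vecMul_eq_sum, Fin.sum_univ_two]
  rfl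

theorem iota_apply_of_lt {i j k l : Fin n} (hkl : k < l) (hij : i < j)
    (S : Matrix (Fin 2) (Fin 2) ℝ) :
    iota k l S i j = if i = k ∧ j = l then S 0 1 else 0 := by
  simp only [iota, of_apply]
  grind

theorem sum_iota_apply_of_lt (S : Fin n → Fin n → Matrix (Fin 2) (Fin 2) ℝ) {i j : Fin n}
    (hij : i < j) :
    (∑ k, ∑ l, if k < l then iota k l (S k l) else 0) i j = S i j 0 1 := by
  have entry (k l : Fin n) : (if k < l then iota k l (S k l) else 0) i j =
      if i = k then if j = l then S i j 0 1 else 0 else 0 := by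
    split_ifs with hkl <;> grind [iota_apply_of_lt, Matrix.zero_apply]
  simp [Matrix.sum_apply, entry]

theorem iota_mem_hull_segmentSquares_one {i j : Fin n} (hij : i < j)
    {S : Matrix (Fin 2) (Fin 2) ℝ} (hS : S.PosSemidef) (h01 : 0 ≤ S 0 1) :
    iota i j S ∈ PointedCone.hull ℝ (segmentSquares (1 : Matrix (Fin n) (Fin n) ℝ)) := by
  obtain ⟨u, v, hu, hv, rfl⟩ := exists_eq_vecMulVec_add_vecMulVec_of_posSemidef hS h01
  rw [iota_eq_congruence, map_add, ← iota_eq_congruence, ← iota_eq_congruence, iota_vecMulVec,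
    iota_vecMulVec]
  exact add_mem (vecMulVec_self_mem_hull_segmentSquares 1 hij (hu 0) (hu 1))
    (vecMulVec_self_mem_hull_segmentSquares 1 hij (hv 0) (hv 1))

end Iota

section Cones

/-- `SDD n` as a pointed cone; the carrier of `sddCone n ⊓ nonnegMatCone n` is `SDDplus n`. -/
def sddCone (n : ℕ) : PointedCone ℝ (Matrix (Fin n) (Fin n) ℝ) where
  carrier := SDD n
  zero_mem' := ⟨0, fun _ _ => PosSemidef.zero, by simp [iota_eq_congruence]⟩
  add_mem' := by
    rintro _ _ ⟨S, hS, rfl⟩ ⟨T, hT, rfl⟩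
    refine ⟨S + T, fun i j => (hS i j).add (hT i j), ?_⟩
    simp only [iota_eq_congruence, Pi.add_apply, map_add, ← Finset.sum_add_distrib,
      ite_add_ite, add_zero]
  smul_mem' := by
    rintro c _ ⟨S, hS, rfl⟩
    refine ⟨c • S, fun i j => (hS i j).smul c.2, ?_⟩
    simp only [iota_eq_congruence, Pi.smul_apply, LinearMap.map_smul_of_tower,
      Finset.smul_sum, smul_ite, smul_zero]

/-- `NonnegMat n` as a pointed cone. -/
def nonnegMatCone (n : ℕ) : PointedCone ℝ (Matrix (Fin n) (Fin n) ℝ) where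
  carrier := NonnegMat n
  zero_mem' := ⟨isSymm_zero, fun _ _ => le_rfl⟩
  add_mem' hX hY := ⟨hX.1.add hY.1, fun i j => add_nonneg (hX.2 i j) (hY.2 i j)⟩
  smul_mem' c _ hX := ⟨hX.1.smul c, fun i j => mul_nonneg c.2 (hX.2 i j)⟩

variable {n : ℕ}

theorem iota_mem_SDD {i j : Fin n} (hij : i < j) {S : Matrix (Fin 2) (Fin 2) ℝ}
    (hS : S.PosSemidef) : iota i j S ∈ SDD n := by
  refine ⟨fun k l => if k = i then if l = j then S else 0 else 0, fun k l => ?_, ?_⟩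
  · dsimp only
    split_ifs
    exacts [hS, .zero, .zero]
  · rw [Finset.sum_eq_single_of_mem i (Finset.mem_univ i) fun k _ hk => by
        simp [hk, iota_eq_congruence],
      Finset.sum_eq_single_of_mem j (Finset.mem_univ j) fun l _ hl => by
        simp [hl, iota_eq_congruence]]
    simp [hij]

theorem vecMulVec_self_mem_NonnegMat {v : Fin n → ℝ} (hv : 0 ≤ v) :
    vecMulVec v v ∈ NonnegMat n :=
  ⟨transpose_vecMulVec v v, fun i j => mul_nonneg (hv i) (hv j)⟩

theorem segmentSquares_one_subset_SDDplus :
    segmentSquares (1 : Matrix (Fin n) (Fin n) ℝ) ⊆ SDDplus n := by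
  rintro _ ⟨i, j, _, hij, ⟨a, b, ha, hb, -, rfl⟩, rfl⟩
  refine ⟨?_, vecMulVec_self_mem_NonnegMat ?_⟩
  · have := iota_mem_SDD hij (posSemidef_vecMulVec_self_star ![a, b])
    rwa [star_trivial, iota_vecMulVec] at this
  · intro k
    have one_nonneg (r : Fin n) : 0 ≤ (1 : Matrix (Fin n) (Fin n) ℝ) r k := by
      rw [Matrix.one_apply]
      positivity
    exact add_nonneg (mul_nonneg ha (one_nonneg i)) (mul_nonneg hb (one_nonneg j))

theorem SDDplus_eq_hull_segmentSquares_one (n : ℕ) :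
    SDDplus n = PointedCone.hull ℝ (segmentSquares (1 : Matrix (Fin n) (Fin n) ℝ)) := by
  apply Subset.antisymm
  · rintro _ ⟨⟨S, hS, rfl⟩, -, nonneg⟩
    refine sum_mem fun i _ => sum_mem fun j _ => ?_
    split_ifs with hij
    · refine iota_mem_hull_segmentSquares_one hij (hS i j) ?_
      rw [← sum_iota_apply_of_lt S hij]
      exact nonneg i j
    · exact zero_mem _
  · exact (Submodule.span_le (p := sddCone n ⊓ nonnegMatCone n)).2 segmentSquares_one_subset_SDDplus

end Cones

theorem SDDplusU_eq_image_congruence {t n : ℕ} (U : Matrix (Fin t) (Fin n) ℝ) :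
    SDDplusU U = congruence U '' SDDplus t := by
  simp only [SDDplusU, image, congruence_apply, eq_comm]

theorem SDDplusU_eq_conicHull_general {t n : ℕ} (U : Matrix (Fin t) (Fin n) ℝ) :
    SDDplusU U =
      conicHull {M | ∃ (i j : Fin t) (v : Fin n → ℝ),
        i < j ∧ v ∈ segment ℝ (U i) (U j) ∧ M = vecMulVec v v} := by
  change SDDplusU U = conicHull (segmentSquares U)
  calc
    SDDplusU U = congruence U '' SDDplus t := SDDplusU_eq_image_congruence U
    _ = (PointedCone.hull ℝ (segmentSquares 1)).map (congruence U) := by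
      rw [SDDplus_eq_hull_segmentSquares_one, PointedCone.coe_map]
    _ = PointedCone.hull ℝ (segmentSquares U) := by
      rw [map_congruence_hull_segmentSquares, Matrix.one_mul]
    _ = conicHull (segmentSquares U) := (conicHull_eq_hull _).symm

/-- `SDDⁿ₊(U)` is the conic hull of all `vvᵀ` with `v ∈ [uᵢ, uⱼ]` for some `1 ≤ i < j ≤ t`. -/
theorem SDDplusU_eq_conicHull {t n : ℕ} (U : Matrix (Fin t) (Fin n) ℝ)
    (hU : ∀ i j, 0 ≤ U i j) (hrow : ∀ i, ∑ j, U i j = 1) :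
    SDDplusU U =
      conicHull {M | ∃ (i j : Fin t) (v : Fin n → ℝ),
        i < j ∧ v ∈ segment ℝ (U i) (U j) ∧ M = vecMulVec v v} :=
  SDDplusU_eq_conicHull_general U

end
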